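/- Let K be a nonempty compact metrizable space whose fd-height is finite, i.e. equal to some natural number. Then the closed unit interval I = [0,1] ℓ-dominates K; that is, there exists a continuous linear map of C_p(I) onto C_p(K). -/

import Mathlib

open Set Function

noncomputable section

/-- Topology of pointwise convergence on `C(X, ℝ)`. -/
def ptTop (X : Type*) [TopologicalSpace X] : TopologicalSpace C(X, ℝ) :=
  TopologicalSpace.induced (fun f => (f : X → ℝ)) Pi.topologicalSpace

/-- `X` ℓ-dominates `Y`: a continuous linear map of `C_p(X)` onto `C_p(Y)`. -/
def LDominates (X Y : Type*) [TopologicalSpace X] [TopologicalSpace Y] : Prop :=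
  ∃ L : C(X, ℝ) →ₗ[ℝ] C(Y, ℝ), @Continuous _ _ (ptTop X) (ptTop Y) L ∧ Surjective L

/-- Covering dimension at most `n`. -/
def CovDimLE (X : Type*) [TopologicalSpace X] (n : ℕ) : Prop :=
  ∀ (ι : Type) (U : ι → Set X), Finite ι → (∀ i, IsOpen (U i)) → (⋃ i, U i) = univ →
    ∃ V : ι → Set X, (∀ i, IsOpen (V i)) ∧ (∀ i, V i ⊆ U i) ∧ (⋃ i, V i) = univ ∧
      ∀ x : X, {i | x ∈ V i}.ncard ≤ n + 1

/-- Finite (covering) dimensional space. -/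
def FinDimSpace (X : Type*) [TopologicalSpace X] : Prop := ∃ n : ℕ, CovDimLE X n

/-- Strongly countable dimensional space. -/
def StronglyCountableDim (X : Type*) [TopologicalSpace X] : Prop :=
  ∃ F : ℕ → Set X, (∀ n, IsClosed (F n)) ∧ (∀ n, FinDimSpace ↥(F n)) ∧ (⋃ n, F n) = univ

/-- `I(S)` relative to a subset: points of `S` with a relatively open
finite dimensional neighbourhood in `S`. -/
def fdI (X : Type*) [TopologicalSpace X] (S : Set X) : Set X :=
  {x | x ∈ S ∧ ∃ U : Set X, IsOpen U ∧ x ∈ U ∧ FinDimSpace ↥(U ∩ S)}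

/-- The transfinite derived sets `K^[α]`. -/
def fdDerived (X : Type*) [TopologicalSpace X] : Ordinal → Set X := fun o =>
  Ordinal.limitRecOn o (univ : Set X)
    (fun _ S => S \ fdI X S)
    (fun o _ ih => ⋂ (o' : Ordinal) (h : o' < o), ih o' h)

/-- A k_ω sequence for `X`. -/
def IsKOmegaSeq (X : Type*) [TopologicalSpace X] (K : ℕ → Set X) : Prop :=
  (∀ n, IsCompact (K n)) ∧ (∀ n, K n ⊆ K (n + 1)) ∧
  (∀ C : Set X, IsCompact C → ∃ n, C ⊆ K n) ∧
  (∀ A : Set X, (∀ n, ∃ F : Set X, IsClosed F ∧ A ∩ K n = F ∩ K n) → IsClosed A)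

def KOmegaSpace (X : Type*) [TopologicalSpace X] : Prop := ∃ K : ℕ → Set X, IsKOmegaSeq X K

/-- Submetrizable: there is a coarser metrizable topology. -/
def Submetrizable (X : Type*) [TopologicalSpace X] : Prop :=
  ∃ t' : TopologicalSpace X, (∀ s : Set X, @IsOpen X t' s → IsOpen s) ∧
    @TopologicalSpace.MetrizableSpace X t'

def Hemicompact (X : Type*) [TopologicalSpace X] : Prop :=
  ∃ K : ℕ → Set X, (∀ n, IsCompact (K n)) ∧ ∀ C : Set X, IsCompact C → ∃ n, C ⊆ K n

/-- `B` is (functionally) bounded in `X`. -/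
def CBounded (X : Type*) [TopologicalSpace X] (B : Set X) : Prop :=
  ∀ f : C(X, ℝ), ∃ M : ℝ, ∀ x ∈ B, |f x| ≤ M

/-- μ-space: closed bounded subsets are compact. -/
def MuSpace (X : Type*) [TopologicalSpace X] : Prop :=
  ∀ B : Set X, IsClosed B → CBounded X B → IsCompact B

/-- `C(K; A)`: continuous functions vanishing on `A`, as a submodule. -/
def Czero (K : Type*) [TopologicalSpace K] (A : Set K) : Submodule ℝ C(K, ℝ) where
  carrier := {f | ∀ x ∈ A, f x = 0}
  add_mem' := by intro f g hf hg x hx; simp [hf x hx, hg x hx]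
  zero_mem' := by intro x hx; simp
  smul_mem' := by intro c f hf x hx; simp [hf x hx]

/-- Pointwise topology on `C(K;A)`. -/
def ptTopSub {K : Type*} [TopologicalSpace K] (A : Set K) :
    TopologicalSpace (Czero K A) :=
  TopologicalSpace.induced (fun f => (f : C(K, ℝ))) (ptTop K)

/-- `c`-good map between relative function spaces. -/
def IsCGood {K₁ K₂ : Type*} [TopologicalSpace K₁] [CompactSpace K₁]
    [TopologicalSpace K₂] [CompactSpace K₂] (A₁ : Set K₁) (A₂ : Set K₂) (c : ℝ)
    (L : Czero K₁ A₁ →ₗ[ℝ] Czero K₂ A₂) : Prop :=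
  @Continuous _ _ (ptTopSub A₁) (ptTopSub A₂) L ∧
  (∀ g : Czero K₁ A₁, ‖(L g : C(K₂, ℝ))‖ ≤ ‖(g : C(K₁, ℝ))‖) ∧
  (∀ f : Czero K₂ A₂, ∃ g : Czero K₁ A₁, L g = f ∧
    ‖(g : C(K₁, ℝ))‖ ≤ c * ‖(f : C(K₂, ℝ))‖)

/-- `c`-good map between full function spaces. -/
def IsCGoodMap {K₁ K₂ : Type*} [TopologicalSpace K₁] [CompactSpace K₁]
    [TopologicalSpace K₂] [CompactSpace K₂] (c : ℝ)
    (L : C(K₁, ℝ) →ₗ[ℝ] C(K₂, ℝ)) : Prop :=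
  @Continuous _ _ (ptTop K₁) (ptTop K₂) L ∧
  (∀ g : C(K₁, ℝ), ‖L g‖ ≤ ‖g‖) ∧
  (∀ f : C(K₂, ℝ), ∃ g : C(K₁, ℝ), L g = f ∧ ‖g‖ ≤ c * ‖f‖)

/-!
A finite-dimensional compactum `K` carries finitely many maps `φ k : K → [0, 1]` such that every
continuous `f` is an average of superpositions `g k ∘ φ k` with `‖g k‖ ≤ 8 ‖f‖`. Indeed a tuple of
`m` maps can be perturbed so that all but `n + 1` of the `g k ∘ φ k` are close to `f` at each point;
for `m = 8 (n + 1)`, Baire's theorem makes one tuple serve a dense sequence of `f` and iterating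
the approximation makes it exact. The constant does not depend on the dimension `n`.

Suppose a compact metrizable `X` is locally finite-dimensional off a closed set `A`. A function
vanishing on `A` is small on all but finitely many members of a locally finite partition of unity
of `X \ A` with finite-dimensional compact supports, so, the constant being uniform, it is glued
from superpositions with a null family of outer functions. Such a family is a continuous function
on a null sequence of intervals, a space that embeds in `[0, 1]`. With Dugundji's linear extension
operator taking care of the values on `A`, the interval dominates `X` once it dominates `A`. Apply
this downwards along the finite chain of derived sets.
-/

section

open Topology Filter
open scoped BigOperators

/-! ### Windows in a partition of the unit interval -/

section Window

/-- The continuous nondecreasing function of `s` which is `0` for `m * s ≤ k` and `1` for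
`k + 1 ≤ m * s`. -/
def ramp (m k : ℕ) (s : ℝ) : ℝ := projIcc 0 1 zero_le_one (m * s - k)

lemma monotone_ramp (m k : ℕ) : Monotone (ramp m k) := fun _ _ hst =>
  monotone_projIcc zero_le_one <| sub_le_sub_right
    (mul_le_mul_of_nonneg_left hst m.cast_nonneg) _

lemma continuous_ramp (m k : ℕ) : Continuous (ramp m k) := by
  unfold ramp
  fun_prop

lemma ramp_eq_zero {m k : ℕ} {s : ℝ} (h : m * s ≤ k) : ramp m k s = 0 := by
  rw [ramp, projIcc_of_le_left _ (by linarith)]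

lemma ramp_eq_one {m k : ℕ} {s : ℝ} (h : k + 1 ≤ m * s) : ramp m k s = 1 := by
  rw [ramp, projIcc_of_right_le _ (by linarith)]

variable {m k N : ℕ} {p : Fin N → ℝ}

/-- The partial sum of the first `i` terms of a finite sequence. -/
def cumSum (p : Fin N → ℝ) (i : ℕ) : ℝ := ∑ j with Fin.val j < i, p j

lemma cumSum_zero (p : Fin N → ℝ) : cumSum p 0 = 0 := by simp [cumSum]

lemma cumSum_succ (p : Fin N → ℝ) (i : Fin N) : cumSum p (i + 1) = cumSum p i + p i := by
  have h : Finset.univ.filter (fun j : Fin N => (j : ℕ) < i + 1) =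
      insert i (Finset.univ.filter fun j : Fin N => (j : ℕ) < i) := by
    ext j
    simp only [Finset.mem_filter_univ, Finset.mem_insert, Fin.ext_iff]
    omega
  rw [cumSum, h, Finset.sum_insert (by simp), add_comm, cumSum]

lemma cumSum_length (p : Fin N → ℝ) : cumSum p N = ∑ i, p i := by simp [cumSum]

/-- Lay consecutive intervals of lengths `p i` along the real line; `windowWeight m k p i` is the
share of the window `[k / m, (k + 1) / m]` taken up by the `i`-th of them. -/
def windowWeight (m k : ℕ) (p : Fin N → ℝ) (i : Fin N) : ℝ :=
  ramp m k (cumSum p (i + 1)) - ramp m k (cumSum p i)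

lemma windowWeight_nonneg (hp : ∀ i, 0 ≤ p i) (i : Fin N) : 0 ≤ windowWeight m k p i :=
  sub_nonneg.2 <| monotone_ramp m k <| by linarith [cumSum_succ p i, hp i]

lemma ne_zero_of_windowWeight_ne_zero {i : Fin N} (h : windowWeight m k p i ≠ 0) : p i ≠ 0 := by
  contrapose! h
  rw [windowWeight, cumSum_succ, h, add_zero, sub_self]

lemma sum_windowWeight (hkm : k < m) (hp : ∑ i, p i = 1) : ∑ i, windowWeight m k p i = 1 := by
  have hkm' : (k : ℝ) + 1 ≤ m := mod_cast hkm
  calc ∑ i, windowWeight m k p i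
      = ∑ i ∈ Finset.range N, (ramp m k (cumSum p (i + 1)) - ramp m k (cumSum p i)) :=
        (Finset.sum_range fun i => ramp m k (cumSum p (i + 1)) - ramp m k (cumSum p i)).symm
    _ = ramp m k (cumSum p N) - ramp m k (cumSum p 0) :=
        Finset.sum_range_sub (fun i => ramp m k (cumSum p i)) N
    _ = 1 := by
        rw [cumSum_length, hp, cumSum_zero, ramp_eq_one (by simpa), ramp_eq_zero (by simp),
          sub_zero]

-- If no interval fills the window, the interval covering its left end ends inside it.
lemma exists_floor_cumSum_eq (hkm : k < m) (hp : ∑ i, p i = 1)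
    (hk : ∀ i, windowWeight m k p i ≠ 1) :
    ∃ i, p i ≠ 0 ∧ ⌊m * cumSum p (i + 1)⌋₊ = k := by
  classical
  have hN : ∃ i, (k : ℝ) < m * cumSum p i := ⟨N, by simpa [cumSum_length, hp] using hkm⟩
  have hfind : Nat.find hN ≠ 0 := fun h0 => by
    have := Nat.find_spec hN
    rw [h0, cumSum_zero] at this
    linarith [k.cast_nonneg (α := ℝ)]
  have hle : Nat.find hN ≤ N := Nat.find_min' hN (by simpa [cumSum_length, hp] using hkm)
  obtain ⟨i, hi⟩ : ∃ i : Fin N, (i : ℕ) + 1 = Nat.find hN :=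
    ⟨⟨Nat.find hN - 1, by omega⟩, Nat.sub_one_add_one hfind⟩
  have hleft : m * cumSum p i ≤ k := not_lt.1 (Nat.find_min hN (by omega))
  have hright : k < m * cumSum p (i + 1) := hi ▸ Nat.find_spec hN
  refine ⟨i, fun h0 => ?_, (Nat.floor_eq_iff (by linarith [k.cast_nonneg (α := ℝ)])).2
    ⟨hright.le, not_le.1 fun hfull => hk i ?_⟩⟩
  · rw [cumSum_succ, h0, add_zero] at hright
    exact hright.not_ge hleft
  · rw [windowWeight, ramp_eq_one hfull, ramp_eq_zero hleft, sub_zero]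

lemma ncard_windowWeight_ne_one_le (m : ℕ) (hp : ∑ i, p i = 1) :
    {k : Fin m | ∀ i, windowWeight m k p i ≠ 1}.ncard ≤ {i | p i ≠ 0}.ncard := by
  choose i hi using fun k : {k : Fin m | ∀ i, windowWeight m k p i ≠ 1} =>
    exists_floor_cumSum_eq k.1.2 hp k.2
  have hinj : Injective i := fun k l hkl => Subtype.ext <| Fin.ext <| by
    rw [← (hi k).2, ← (hi l).2, hkl]
  rw [← Nat.card_coe_set_eq, ← Nat.card_coe_set_eq]
  exact Nat.card_le_card_of_injective (fun k => (⟨i k, (hi k).1⟩ : {i | p i ≠ 0}))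
    fun k l hkl => hinj (congrArg Subtype.val hkl)

variable {X : Type*} [TopologicalSpace X]

/-- The partition of unity whose members record how the intervals of lengths `ρ i x` fill the
window `[k / m, (k + 1) / m]`. -/
def windowPartition (ρ : PartitionOfUnity (Fin N) X) (k : Fin m) :
    PartitionOfUnity (Fin N) X where
  toFun i := ⟨fun x => windowWeight m k (fun j => ρ j x) i, by
    have hcum : ∀ l, Continuous fun x => cumSum (fun j => ρ j x) l := fun l => by
      unfold cumSum
      fun_prop
    exact ((continuous_ramp m k).comp (hcum _)).sub ((continuous_ramp m k).comp (hcum _))⟩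
  locallyFinite' := locallyFinite_of_finite _
  nonneg' i x := windowWeight_nonneg (fun j => ρ.nonneg j x) i
  sum_eq_one' x hx := by
    rw [finsum_eq_sum_of_fintype]
    exact sum_windowWeight k.2 (by rw [← finsum_eq_sum_of_fintype, ρ.sum_eq_one hx])
  sum_le_one' x := by
    rw [finsum_eq_sum_of_fintype]
    exact (sum_windowWeight k.2 (by rw [← finsum_eq_sum_of_fintype, ρ.sum_eq_one trivial])).le

end Window

namespace CovDimLE

variable {K : Type*} [MetricSpace K] [CompactSpace K] {n : ℕ} {ε : ℝ}

lemma exists_partitionOfUnity (h : CovDimLE K n) (hε : 0 < ε) :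
    ∃ (N : ℕ) (ρ : PartitionOfUnity (Fin N) K),
      (∀ i x y, ρ i x ≠ 0 → ρ i y ≠ 0 → dist x y < ε) ∧ ∀ x, {i | ρ i x ≠ 0}.ncard ≤ n + 1 := by
  obtain ⟨t, ht⟩ := isCompact_univ.elim_finite_subcover (fun x : K => Metric.ball x (ε / 2))
    (fun x => Metric.isOpen_ball) fun x _ => mem_iUnion.2 ⟨x, Metric.mem_ball_self (half_pos hε)⟩
  let center : Fin t.card → K := fun i => t.equivFin.symm i
  have hcover : ⋃ i, Metric.ball (center i) (ε / 2) = univ := eq_univ_iff_forall.2 fun x => by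
    obtain ⟨y, hy, hxy⟩ := mem_iUnion₂.1 (ht (mem_univ x))
    exact mem_iUnion.2 ⟨t.equivFin ⟨y, hy⟩, by simpa [center] using hxy⟩
  obtain ⟨V, hV, hVball, hVcover, hVcard⟩ := h (Fin t.card)
    (fun i => Metric.ball (center i) (ε / 2)) inferInstance (fun i => Metric.isOpen_ball) hcover
  obtain ⟨ρ, hρ⟩ := PartitionOfUnity.exists_isSubordinate isClosed_univ V hV hVcover.ge
  have hρV : ∀ i x, ρ i x ≠ 0 → x ∈ V i := fun i x hx => hρ i (subset_tsupport _ hx)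
  refine ⟨t.card, ρ, fun i x y hx hy => ?_, fun x => ?_⟩
  · have hx' : dist x (center i) < ε / 2 := hVball i (hρV i x hx)
    have hy' : dist y (center i) < ε / 2 := hVball i (hρV i y hy)
    linarith [dist_triangle_right x y (center i)]
  · exact (ncard_le_ncard fun i => hρV i x).trans (hVcard x)

lemma exists_partitionsOfUnity (h : CovDimLE K n) (m : ℕ) (hε : 0 < ε) :
    ∃ (N : ℕ) (ρ : Fin m → PartitionOfUnity (Fin N) K),
      (∀ k i x y, ρ k i x ≠ 0 → ρ k i y ≠ 0 → dist x y < ε) ∧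
      ∀ x, {k | ∀ i, ρ k i x ≠ 1}.ncard ≤ n + 1 := by
  obtain ⟨N, ρ, hsmall, hcard⟩ := h.exists_partitionOfUnity hε
  refine ⟨N, windowPartition ρ, fun k i x y hx hy => hsmall i x y
    (ne_zero_of_windowWeight_ne_zero hx) (ne_zero_of_windowWeight_ne_zero hy), fun x => ?_⟩
  have hsum : ∑ i, ρ i x = 1 := by rw [← finsum_eq_sum_of_fintype, ρ.sum_eq_one (mem_univ x)]
  exact (ncard_windowWeight_ne_one_le m hsum).trans (hcard x)

end CovDimLE

/-! ### Kolmogorov superpositions on finite-dimensional compacta -/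

lemma exists_injective_forall_mem_of_infinite {ι α : Type*} [Finite ι] {S : ι → Set α}
    (hS : ∀ i, (S i).Infinite) : ∃ c : ι → α, Injective c ∧ ∀ i, c i ∈ S i := by
  classical
  have := Fintype.ofFinite ι
  choose t htS htcard using fun i => (hS i).exists_subset_card_eq (Fintype.card ι)
  have hall : ∀ s : Finset ι, s.card ≤ (s.biUnion t).card := fun s => by
    rcases s.eq_empty_or_nonempty with rfl | ⟨i, hi⟩
    · simp
    · calc s.card ≤ (t i).card := (htcard i).symm ▸ s.card_le_univ
        _ ≤ (s.biUnion t).card := Finset.card_le_card (Finset.subset_biUnion_of_mem t hi)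
  obtain ⟨c, hc, hct⟩ := (Finset.all_card_le_biUnion_card_iff_exists_injective t).1 hall
  exact ⟨c, hc, fun i => htS i (hct i)⟩

lemma exists_extension_norm_eq_of_isClosedEmbedding {X Y : Type*} [TopologicalSpace X]
    [TopologicalSpace Y] [CompactSpace X] [CompactSpace Y] [NormalSpace Y] {e : X → Y}
    (he : IsClosedEmbedding e) (f : C(X, ℝ)) : ∃ g : C(Y, ℝ), ‖g‖ = ‖f‖ ∧ ∀ x, g (e x) = f x := by
  obtain ⟨g, hg, hge⟩ := BoundedContinuousFunction.exists_extension_norm_eq_of_isClosedEmbedding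
    (BoundedContinuousFunction.mkOfCompact f) he
  exact ⟨g.toContinuousMap, by simpa using hg, fun x => congrFun hge x⟩

section Superposition

variable {ι X Y : Type*} [Fintype ι] [TopologicalSpace X] [TopologicalSpace Y]

/-- The average of the superpositions `g k ∘ φ k`, as a continuous linear function of `g`. -/
def meanSuperposition (φ : ι → C(X, Y)) : (ι → C(Y, ℝ)) →L[ℝ] C(X, ℝ) where
  toFun g := (Fintype.card ι : ℝ)⁻¹ • ∑ k, (g k).comp (φ k)
  map_add' g g' := by
    rw [← smul_add, ← Finset.sum_add_distrib]
    rfl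
  map_smul' c g := by
    rw [RingHom.id_apply, smul_comm c, Finset.smul_sum (r := c)]
    rfl
  cont := (continuous_finsetSum _ fun k _ =>
    (φ k).continuous_precomp.comp (continuous_apply k)).const_smul (Fintype.card ι : ℝ)⁻¹

lemma meanSuperposition_apply (φ : ι → C(X, Y)) (g : ι → C(Y, ℝ)) (x : X) :
    meanSuperposition φ g x = 𝔼 k, g k (φ k x) := by
  simp [meanSuperposition, Fintype.expect_eq_sum_div_card, inv_mul_eq_div]

lemma norm_meanSuperposition_le [CompactSpace X] [CompactSpace Y] (φ : ι → C(X, Y))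
    (g : ι → C(Y, ℝ)) : ‖meanSuperposition φ g‖ ≤ ‖g‖ := by
  refine (ContinuousMap.norm_le _ (norm_nonneg _)).2 fun x => ?_
  rw [meanSuperposition_apply, Real.norm_eq_abs]
  rcases isEmpty_or_nonempty ι with _ | _
  · simp
  calc |𝔼 k, g k (φ k x)| ≤ 𝔼 k, |g k (φ k x)| := Finset.abs_expect_le _ _
    _ ≤ ‖g‖ := Finset.expect_le Finset.univ_nonempty fun k _ =>
        ((g k).norm_coe_le_norm _).trans (norm_le_pi_norm g k)

end Superposition

section Approximation

variable {X : Type*} [TopologicalSpace X] {N : ℕ}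

/-- The map into the unit interval taking the weighted average of the points `c i`, with the
members of a partition of unity as weights. -/
def blend (ρ : PartitionOfUnity (Fin N) X) (c : Fin N → unitInterval) : C(X, unitInterval) where
  toFun x := ⟨∑ i, ρ i x • (c i : ℝ), (convex_Icc (0 : ℝ) 1).sum_mem (fun i _ => ρ.nonneg i x)
    (by rw [← finsum_eq_sum_of_fintype, ρ.sum_eq_one (mem_univ x)]) fun i _ => (c i).2⟩

lemma blend_apply (ρ : PartitionOfUnity (Fin N) X) (c : Fin N → unitInterval) (x : X) :
    (blend ρ c x : ℝ) = ∑ᶠ i, ρ i x • (c i : ℝ) :=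
  (finsum_eq_sum_of_fintype fun i => ρ i x • (c i : ℝ)).symm

lemma dist_blend_le {ρ : PartitionOfUnity (Fin N) X} {c : Fin N → unitInterval} {x : X}
    {y : unitInterval} {r : ℝ} (h : ∀ i, ρ i x ≠ 0 → dist (c i) y ≤ r) :
    dist (blend ρ c x) y ≤ r := by
  rw [Subtype.dist_eq, blend_apply]
  exact ρ.finsum_smul_mem_convex (g := fun i _ => (c i : ℝ)) (mem_univ x) h
    (convex_closedBall (y : ℝ) r)

lemma blend_eq_of_eq_one {ρ : PartitionOfUnity (Fin N) X} {i : Fin N} {x : X} (h : ρ i x = 1)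
    (c : Fin N → unitInterval) : blend ρ c x = c i := by
  have hsum : ∑ j, ρ j x = 1 := by rw [← finsum_eq_sum_of_fintype, ρ.sum_eq_one (mem_univ x)]
  have hrest : ∑ j ∈ Finset.univ.erase i, ρ j x = 0 := by
    linarith [Finset.add_sum_erase Finset.univ (fun j => ρ j x) (Finset.mem_univ i)]
  refine dist_le_zero.1 (dist_blend_le fun j hj => ?_)
  rcases eq_or_ne j i with rfl | hji
  · rw [dist_self]
  · exact absurd ((Finset.sum_eq_zero_iff_of_nonneg fun j _ => ρ.nonneg j x).1 hrest j
      (Finset.mem_erase.2 ⟨hji, Finset.mem_univ j⟩)) hj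

variable [CompactSpace X]

lemma exists_near_values {s : Set X} {f : C(X, ℝ)} {φ : C(X, unitInterval)} {δ ε : ℝ}
    (hf : ∀ x ∈ s, ∀ y ∈ s, |f x - f y| ≤ ε) (hφ : ∀ x ∈ s, ∀ y ∈ s, dist (φ x) (φ y) ≤ δ) :
    ∃ (z : unitInterval) (a : ℝ), |a| ≤ ‖f‖ ∧
      ∀ x ∈ s, dist z (φ x) ≤ δ ∧ |f x - a| ≤ ε := by
  rcases s.eq_empty_or_nonempty with rfl | ⟨y, hy⟩
  · exact ⟨0, 0, by simp⟩
  · exact ⟨φ y, f y, f.norm_coe_le_norm y, fun x hx => ⟨hφ y hy x hx, hf x hx y hy⟩⟩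

-- Separating the centres `c i` makes `f` a function of `blend ρ c` wherever one weight is `1`.
lemma exists_approx_comp_of_partitionOfUnity (ρ : PartitionOfUnity (Fin N) X) (f : C(X, ℝ))
    (φ : C(X, unitInterval)) {δ ε : ℝ} (hδ : 0 < δ)
    (hf : ∀ i x y, ρ i x ≠ 0 → ρ i y ≠ 0 → |f x - f y| ≤ ε)
    (hφ : ∀ i x y, ρ i x ≠ 0 → ρ i y ≠ 0 → dist (φ x) (φ y) ≤ δ) :
    ∃ φ' : C(X, unitInterval), dist φ' φ ≤ 2 * δ ∧ ∃ g : C(unitInterval, ℝ), ‖g‖ ≤ ‖f‖ ∧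
      ∀ x i, ρ i x = 1 → |f x - g (φ' x)| ≤ ε := by
  choose z a ha hza using fun i => exists_near_values (s := {x | ρ i x ≠ 0})
    (fun x hx y hy => hf i x y hx hy) fun x hx y hy => hφ i x y hx hy
  obtain ⟨c, hcinj, hcz⟩ := exists_injective_forall_mem_of_infinite fun i =>
    infinite_of_mem_nhds (z i) (Metric.ball_mem_nhds (z i) hδ)
  have hc : IsClosedEmbedding c :=
    continuous_of_discreteTopology.isClosedEmbedding hcinj
  obtain ⟨g, hg, hgc⟩ := exists_extension_norm_eq_of_isClosedEmbedding hc
    ⟨a, continuous_of_discreteTopology⟩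
  refine ⟨blend ρ c, ?_, g, ?_, fun x i hi => ?_⟩
  · refine (ContinuousMap.dist_le (by positivity)).2 fun x => dist_blend_le fun i hi => ?_
    linarith [dist_triangle (c i) (z i) (φ x), Metric.mem_ball.1 (hcz i), (hza i x hi).1]
  · exact hg.trans_le ((ContinuousMap.norm_le _ (norm_nonneg _)).2 ha)
  · rw [blend_eq_of_eq_one hi, hgc]
    exact (hza i x (ne_of_eq_of_ne hi one_ne_zero)).2

end Approximation

section Kolmogorov

variable {K : Type*}

lemma norm_sub_meanSuperposition_le {ι Y : Type*} [Fintype ι] [Nonempty ι] [TopologicalSpace K]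
    [CompactSpace K] [TopologicalSpace Y] [CompactSpace Y] {f : C(K, ℝ)} {φ : ι → C(K, Y)}
    {g : ι → C(Y, ℝ)} {n : ℕ} {ε : ℝ} (hε : 0 ≤ ε) (hg : ‖g‖ ≤ ‖f‖)
    (hbad : ∀ x, {k | ε < |f x - g k (φ k x)|}.ncard ≤ n) :
    ‖f - meanSuperposition φ g‖ ≤ 2 * n / Fintype.card ι * ‖f‖ + ε := by
  classical
  refine (ContinuousMap.norm_le _ (by positivity)).2 fun x => ?_
  have hcard : (Finset.univ.filter fun k => ε < |f x - g k (φ k x)|).card ≤ n := by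
    simpa [← Set.ncard_coe_finset] using hbad x
  have hle : ∀ k, |f x - g k (φ k x)| ≤ (if ε < |f x - g k (φ k x)| then 2 * ‖f‖ else 0) + ε := by
    intro k
    split_ifs with hk
    · have hfx : |f x| ≤ ‖f‖ := f.norm_coe_le_norm x
      have hgx : |g k (φ k x)| ≤ ‖f‖ :=
        ((g k).norm_coe_le_norm _).trans ((norm_le_pi_norm g k).trans hg)
      linarith [abs_sub (f x) (g k (φ k x))]
    · rw [zero_add]
      exact not_lt.1 hk
  calc ‖(f - meanSuperposition φ g) x‖ = |𝔼 k, (f x - g k (φ k x))| := by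
        rw [Finset.expect_sub_distrib, Fintype.expect_const, ← meanSuperposition_apply]
        rfl
    _ ≤ 𝔼 k, |f x - g k (φ k x)| := Finset.abs_expect_le _ _
    _ ≤ 𝔼 k, ((if ε < |f x - g k (φ k x)| then 2 * ‖f‖ else 0) + ε) :=
        Finset.expect_le_expect fun k _ => hle k
    _ = 2 * (Finset.univ.filter fun k => ε < |f x - g k (φ k x)|).card / Fintype.card ι * ‖f‖
          + ε := by
        rw [Finset.expect_add_distrib, Fintype.expect_const, Fintype.expect_eq_sum_div_card,
          ← Finset.sum_filter, Finset.sum_const, nsmul_eq_mul]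
        ring
    _ ≤ 2 * n / Fintype.card ι * ‖f‖ + ε := by gcongr

lemma CovDimLE.exists_approx_superposition [MetricSpace K] [CompactSpace K] {n m : ℕ} [NeZero m]
    (h : CovDimLE K n) (f : C(K, ℝ)) (φ : Fin m → C(K, unitInterval)) {ε : ℝ} (hε : 0 < ε) :
    ∃ φ' : Fin m → C(K, unitInterval), dist φ' φ ≤ ε ∧ ∃ g : Fin m → C(unitInterval, ℝ),
      ‖g‖ ≤ ‖f‖ ∧ ‖f - meanSuperposition φ' g‖ ≤ 2 * (n + 1) / m * ‖f‖ + ε := by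
  obtain ⟨ηf, hηf, hf⟩ := Metric.uniformContinuous_iff.1
    (CompactSpace.uniformContinuous_of_continuous f.continuous) ε hε
  obtain ⟨ηφ, hηφ, hφ⟩ := Metric.uniformContinuous_iff.1
    (CompactSpace.uniformContinuous_of_continuous (continuous_pi fun k => (φ k).continuous))
    (ε / 2) (half_pos hε)
  obtain ⟨N, ρ, hsmall, hbad⟩ := h.exists_partitionsOfUnity m (lt_min hηf hηφ)
  choose φ' hφ' g hg hgf using fun k => exists_approx_comp_of_partitionOfUnity (ρ k) f (φ k)
    (half_pos hε)
    (fun i x y hx hy => (hf ((hsmall k i x y hx hy).trans_le (min_le_left _ _))).le)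
    fun i x y hx hy => (dist_le_pi_dist _ _ k).trans
      (hφ ((hsmall k i x y hx hy).trans_le (min_le_right _ _))).le
  have hgn : ‖g‖ ≤ ‖f‖ := (pi_norm_le_iff_of_nonneg (norm_nonneg _)).2 hg
  refine ⟨φ', (dist_pi_le_iff hε.le).2 fun k => by linarith [hφ' k], g, hgn, ?_⟩
  have hcard : ∀ x, {k | ε < |f x - g k (φ' k x)|}.ncard ≤ n + 1 := fun x =>
    (ncard_le_ncard fun k hk i hi => (hgf k x i hi).not_gt hk).trans (hbad x)
  simpa using norm_sub_meanSuperposition_le hε.le hgn hcard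

lemma exists_preimage_norm_le_of_approx {𝕜 E F : Type*} [NormedField 𝕜] [NormedAddCommGroup E]
    [NormedSpace 𝕜 E] [CompleteSpace E] [NormedAddCommGroup F] [NormedSpace 𝕜 F] (T : E →L[𝕜] F)
    {C q : ℝ} (hC : 0 ≤ C) (hq₀ : 0 ≤ q) (hq : q < 1)
    (h : ∀ y, ∃ x, ‖x‖ ≤ C * ‖y‖ ∧ ‖y - T x‖ ≤ q * ‖y‖) (y : F) :
    ∃ x, T x = y ∧ ‖x‖ ≤ C * ‖y‖ * (1 - q)⁻¹ := by
  choose s hs hsT using h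
  let r : ℕ → F := fun n => (fun z => z - T (s z))^[n] y
  have hr_succ : ∀ n, r (n + 1) = r n - T (s (r n)) := fun n => iterate_succ_apply' _ n y
  have hr : ∀ n, ‖r n‖ ≤ q ^ n * ‖y‖ := fun n => by
    induction n with
    | zero => simp [r]
    | succ n ih =>
      calc ‖r (n + 1)‖ ≤ q * ‖r n‖ := hr_succ n ▸ hsT (r n)
        _ ≤ q * (q ^ n * ‖y‖) := by gcongr
        _ = q ^ (n + 1) * ‖y‖ := by ring
  have hs_le : ∀ n, ‖s (r n)‖ ≤ C * ‖y‖ * q ^ n := fun n =>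
    calc ‖s (r n)‖ ≤ C * (q ^ n * ‖y‖) := (hs _).trans (by gcongr; exact hr n)
      _ = C * ‖y‖ * q ^ n := by ring
  have hgeom := (hasSum_geometric_of_lt_one hq₀ hq).mul_left (C * ‖y‖)
  have hsum : Summable fun n => s (r n) := .of_norm_bounded hgeom.summable hs_le
  refine ⟨∑' n, s (r n), ?_, tsum_of_norm_bounded hgeom hs_le⟩
  have hpartial : ∀ n, T (∑ i ∈ Finset.range n, s (r i)) = y - r n := fun n => by
    induction n with
    | zero => simp [r]
    | succ n ih => rw [Finset.sum_range_succ, map_add, ih, hr_succ]; abel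
  have hr_lim : Tendsto r atTop (𝓝 0) := squeeze_zero_norm hr <| by
    simpa using (tendsto_pow_atTop_nhds_zero_of_lt_one hq₀ hq).mul_const ‖y‖
  have hT_lim : Tendsto (fun n => y - r n) atTop (𝓝 y) := by
    simpa using tendsto_const_nhds.sub hr_lim
  exact tendsto_nhds_unique (((T.continuous.tendsto _).comp hsum.hasSum.tendsto_sum_nat).congr
    hpartial) hT_lim

variable [TopologicalSpace K] [CompactSpace K]

/-- The tuples of maps whose superpositions approximate `f` up to half its norm, using outer
functions no larger than `f`. -/
def halfApproximating (ι : Type*) [Fintype ι] (f : C(K, ℝ)) : Set (ι → C(K, unitInterval)) :=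
  {φ | ∃ g : ι → C(unitInterval, ℝ), ‖g‖ ≤ ‖f‖ ∧ ‖f - meanSuperposition φ g‖ < ‖f‖ / 2}

lemma isOpen_halfApproximating (ι : Type*) [Fintype ι] (f : C(K, ℝ)) :
    IsOpen (halfApproximating ι f) := by
  have hcont : ∀ g : ι → C(unitInterval, ℝ),
      Continuous fun φ : ι → C(K, unitInterval) => meanSuperposition φ g := fun g =>
    (continuous_finsetSum _ fun k _ =>
      (g k).continuous_postcomp.comp (continuous_apply k)).const_smul (Fintype.card ι : ℝ)⁻¹
  simp only [halfApproximating, ofPred_exists, ofPred_and]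
  exact isOpen_iUnion fun g => isOpen_const.inter
    (isOpen_lt (continuous_const.sub (hcont g)).norm continuous_const)

-- The `n + 1` terms that may be far from `f` contribute at most a quarter of `‖f‖` to the error.
lemma CovDimLE.dense_halfApproximating [TopologicalSpace.MetrizableSpace K] {n : ℕ}
    (h : CovDimLE K n) {f : C(K, ℝ)} (hf : f ≠ 0) :
    Dense (halfApproximating (Fin (8 * (n + 1))) f) := by
  let := TopologicalSpace.metrizableSpaceMetric K
  have hf' : 0 < ‖f‖ := norm_pos_iff.2 hf
  refine Metric.dense_iff.2 fun φ r hr => ?_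
  obtain ⟨φ', hφ', g, hg, hgf⟩ :=
    h.exists_approx_superposition f φ (ε := min (r / 2) (‖f‖ / 8)) (by positivity)
  refine ⟨φ', by simpa using (hφ'.trans (min_le_left _ _)).trans_lt (half_lt_self hr), g, hg, ?_⟩
  have hcoef : 2 * ((n : ℝ) + 1) / ((8 * (n + 1) : ℕ) : ℝ) = 1 / 4 := by
    push_cast
    field_simp
    norm_num
  rw [hcoef] at hgf
  linarith [min_le_right (r / 2) (‖f‖ / 8)]

lemma exists_approx_of_mem_halfApproximating {ι : Type*} [Fintype ι] {φ : ι → C(K, unitInterval)}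
    {s : Set C(K, ℝ)} (hs : Dense s) (hφ : ∀ d ∈ s, d ≠ 0 → φ ∈ halfApproximating ι d)
    (f : C(K, ℝ)) :
    ∃ g : ι → C(unitInterval, ℝ),
      ‖g‖ ≤ 2 * ‖f‖ ∧ ‖f - meanSuperposition φ g‖ ≤ 3 / 4 * ‖f‖ := by
  rcases eq_or_ne f 0 with rfl | hf
  · exact ⟨0, by simp⟩
  have hf' : 0 < ‖f‖ := norm_pos_iff.2 hf
  obtain ⟨d, hds, hfd⟩ := hs.exists_dist_lt f (ε := ‖f‖ / 8) (by positivity)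
  rw [dist_eq_norm] at hfd
  have hd : ‖d‖ ≤ 9 / 8 * ‖f‖ := by linarith [norm_le_norm_add_norm_sub f d]
  obtain ⟨g, hg, hgd⟩ := hφ d hds fun h0 => by
    rw [h0, sub_zero] at hfd
    linarith
  refine ⟨g, by linarith, ?_⟩
  linarith [norm_sub_le_norm_sub_add_norm_sub f d (meanSuperposition φ g)]

theorem FinDimSpace.exists_superposition [TopologicalSpace.MetrizableSpace K] (h : FinDimSpace K) :
    ∃ (m : ℕ) (φ : Fin m → C(K, unitInterval)), ∀ f : C(K, ℝ), ∃ g : Fin m → C(unitInterval, ℝ),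
      meanSuperposition φ g = f ∧ ‖g‖ ≤ 8 * ‖f‖ := by
  obtain ⟨n, hn⟩ := h
  obtain ⟨s, hs_countable, hs_dense⟩ := TopologicalSpace.exists_countable_dense C(K, ℝ)
  obtain ⟨φ, hφ⟩ := (dense_biInter_of_isOpen (S := s \ {0})
    (fun d _ => isOpen_halfApproximating (Fin (8 * (n + 1))) d) (hs_countable.mono sdiff_subset)
    fun d hd => hn.dense_halfApproximating hd.2).nonempty
  refine ⟨_, φ, fun f => ?_⟩
  obtain ⟨g, hgf, hg⟩ := exists_preimage_norm_le_of_approx (meanSuperposition φ) zero_le_two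
    (by norm_num) (by norm_num) (exists_approx_of_mem_halfApproximating hs_dense fun d hds hd =>
      mem_iInter₂.1 hφ d ⟨hds, hd⟩) f
  exact ⟨g, hgf, by linarith⟩

theorem FinDimSpace.exists_superposition_of_isClosedEmbedding {X : Type*} [TopologicalSpace X]
    [NormalSpace X] [TopologicalSpace.MetrizableSpace K] {e : K → X} (h : FinDimSpace K)
    (he : IsClosedEmbedding e) :
    ∃ (m : ℕ) (φ : Fin m → C(X, unitInterval)), ∀ f : C(K, ℝ), ∃ g : Fin m → C(unitInterval, ℝ),
      ‖g‖ ≤ 8 * ‖f‖ ∧ ∀ x, meanSuperposition φ g (e x) = f x := by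
  obtain ⟨m, φ, hφ⟩ := h.exists_superposition
  choose φ' hφ' using fun k => (φ k).exists_extension' he
  refine ⟨m, φ', fun f => ?_⟩
  obtain ⟨g, hgf, hg⟩ := hφ f
  refine ⟨g, hg, fun x => ?_⟩
  rw [← hgf, meanSuperposition_apply, meanSuperposition_apply]
  exact Finset.expect_congr rfl fun k _ => congrArg (g k) (congrFun (hφ' k) x)

end Kolmogorov

/-! ### Domination and null sequences of intervals -/

section PointwiseTopology

variable {X Y Z : Type*} [TopologicalSpace X] [TopologicalSpace Y]

lemma continuous_eval_ptTop (x : X) : Continuous[ptTop X, _] fun f : C(X, ℝ) => f x :=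
  let := ptTop X
  (continuous_apply x).comp continuous_induced_dom

lemma continuous_ptTop_iff {t : TopologicalSpace Z} {F : Z → C(X, ℝ)} :
    Continuous[t, ptTop X] F ↔ ∀ x, Continuous fun z => F z x :=
  continuous_induced_rng.trans continuous_pi_iff

lemma continuous_precomp_ptTop (φ : C(X, Y)) :
    Continuous[ptTop Y, ptTop X] fun f : C(Y, ℝ) => f.comp φ :=
  continuous_ptTop_iff.2 fun x => continuous_eval_ptTop (φ x)

lemma continuous_meanSuperposition_ptTop {ι : Type*} [Fintype ι] [TopologicalSpace Z]
    (φ : ι → C(X, Y)) (F : ι → C(Z, ℝ) → C(Y, ℝ))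
    (hF : ∀ k, Continuous[ptTop Z, ptTop Y] (F k)) :
    Continuous[ptTop Z, ptTop X] fun f => meanSuperposition φ fun k => F k f := by
  refine continuous_ptTop_iff.2 fun x => ?_
  simp only [meanSuperposition_apply, Fintype.expect_eq_sum_div_card]
  let := ptTop Z
  exact (continuous_finsetSum _ fun k _ =>
    continuous_ptTop_iff.1 (hF k) (φ k x)).div_const _

end PointwiseTopology

namespace LDominates

variable {X Y Z : Type*} [TopologicalSpace X] [TopologicalSpace Y] [TopologicalSpace Z]

lemma trans (hXY : LDominates X Y) (hYZ : LDominates Y Z) : LDominates X Z := by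
  obtain ⟨L, hL, hL_surj⟩ := hXY
  obtain ⟨M, hM, hM_surj⟩ := hYZ
  exact ⟨M ∘ₗ L, @Continuous.comp _ _ _ (ptTop X) (ptTop Y) (ptTop Z) _ _ hM hL,
    hM_surj.comp hL_surj⟩

lemma of_isEmpty [IsEmpty Y] : LDominates X Y :=
  ⟨0, continuous_ptTop_iff.2 isEmptyElim, fun _ => ⟨0, ContinuousMap.ext isEmptyElim⟩⟩

lemma of_isClosedEmbedding [NormalSpace X] {e : Y → X} (he : IsClosedEmbedding e) :
    LDominates X Y :=
  ⟨(ContinuousMap.compRightAlgHom ℝ ℝ ⟨e, he.continuous⟩).toLinearMap,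
    continuous_precomp_ptTop _, fun f => f.exists_extension he⟩

end LDominates

lemma injective_two_mul_add_one_add {J : Type*} {c : J → ℕ} (hc : Injective c) :
    Injective fun q : J × unitInterval => (2 * c q.1 + 1 + q.2 : ℝ) := by
  rintro ⟨i, s⟩ ⟨j, t⟩ h
  have hs := s.2
  have ht := t.2
  simp only [mem_Icc] at h hs ht
  have hij : c i < c j + 1 := by exact_mod_cast (by linarith : (c i : ℝ) < c j + 1)
  have hji : c j < c i + 1 := by exact_mod_cast (by linarith : (c j : ℝ) < c i + 1)
  obtain rfl : i = j := hc (by omega)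
  exact congrArg _ (Subtype.ext (by linarith))

lemma exists_isClosedEmbedding_unitInterval_sum :
    ∃ e : unitInterval ⊕ unitInterval → unitInterval, IsClosedEmbedding e := by
  let l : unitInterval → unitInterval :=
    fun t => ⟨t / 3, by constructor <;> linarith [t.2.1, t.2.2]⟩
  let r : unitInterval → unitInterval :=
    fun t => ⟨(2 + t) / 3, by constructor <;> linarith [t.2.1, t.2.2]⟩
  have hl : Injective l := fun s t h => Subtype.ext <| by
    have hst : (s : ℝ) / 3 = t / 3 := congrArg Subtype.val h
    linarith
  have hr : Injective r := fun s t h => Subtype.ext <| by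
    have hst : (2 + s : ℝ) / 3 = (2 + t) / 3 := congrArg Subtype.val h
    linarith
  have hlr : ∀ s t, l s ≠ r t := fun s t h => by
    have hst : (s : ℝ) / 3 = (2 + t) / 3 := congrArg Subtype.val h
    linarith [s.2.2, t.2.1]
  exact ⟨Sum.elim l r, (Continuous.sumElim (Continuous.subtype_mk (by fun_prop) _)
    (Continuous.subtype_mk (by fun_prop) _)).isClosedEmbedding (hl.sumElim hr hlr)⟩

section NullSequence

open OnePoint

variable {J Y : Type*} [TopologicalSpace J] [TopologicalSpace Y]

/-- The restriction of `g` to the `j`-th copy of `Y`, normalised to vanish at infinity. -/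
def slice : C(OnePoint (J × Y), ℝ) →ₗ[ℝ] J → C(Y, ℝ) where
  toFun g j := ⟨fun y => g (j, y) - g ∞,
    (g.continuous.comp (OnePoint.continuous_coe.comp (by fun_prop))).sub continuous_const⟩
  map_add' g g' := by
    ext j y
    simp [add_sub_add_comm]
  map_smul' c g := by
    ext j y
    simp [mul_sub]

lemma slice_apply (g : C(OnePoint (J × Y), ℝ)) (j : J) (y : Y) :
    slice g j y = g (j, y) - g ∞ := rfl

lemma continuous_slice_ptTop (j : J) :
    Continuous[ptTop (OnePoint (J × Y)), ptTop Y] fun g => slice g j :=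
  continuous_ptTop_iff.2 fun _ =>
    let := ptTop (OnePoint (J × Y))
    (continuous_eval_ptTop _).sub (continuous_eval_ptTop _)

variable [DiscreteTopology J] [CompactSpace Y] [T2Space Y]

lemma coclosedCompact_prod_of_discreteTopology : coclosedCompact (J × Y) = cofinite ×ˢ ⊤ := by
  rw [coclosedCompact_eq_cocompact, ← coprod_cocompact, cocompact_eq_bot (X := Y),
    cocompact_eq_cofinite, coprod_bot, prod_top]

lemma tendsto_coclosedCompact_prod_iff {γ : J → C(Y, ℝ)} :
    Tendsto (fun q : J × Y => γ q.1 q.2) (coclosedCompact (J × Y)) (𝓝 0) ↔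
      Tendsto γ cofinite (𝓝 0) := by
  rw [ContinuousMap.tendsto_iff_tendstoUniformly, tendstoUniformly_iff_tendsto,
    coclosedCompact_prod_of_discreteTopology, nhds_eq_comap_uniformity, tendsto_comap_iff]
  rfl

lemma tendsto_slice (g : C(OnePoint (J × Y), ℝ)) : Tendsto (slice g) cofinite (𝓝 0) := by
  refine tendsto_coclosedCompact_prod_iff.1 ?_
  simpa [slice_apply] using ((OnePoint.continuous_iff g).1 g.continuous).1.sub_const (g ∞)

lemma exists_slice_eq {γ : J → C(Y, ℝ)} (hγ : Tendsto γ cofinite (𝓝 0)) :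
    ∃ g : C(OnePoint (J × Y), ℝ), slice g = γ := by
  refine ⟨continuousMapMk ⟨fun q => γ q.1 q.2, ?_⟩ 0 (tendsto_coclosedCompact_prod_iff.2 hγ), ?_⟩
  · exact continuous_prod_of_discrete_left.2 fun j => (γ j).continuous
  · ext j y
    exact sub_zero _

lemma exists_isClosedEmbedding_onePoint_prod_unitInterval [Countable J] :
    ∃ e : OnePoint (J × unitInterval) → unitInterval, IsClosedEmbedding e := by
  obtain ⟨c, hc⟩ := exists_injective_nat J
  have hge : ∀ q : J × unitInterval, (c q.1 + 1 : ℝ) ≤ 2 * c q.1 + 1 + q.2 := fun q => by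
    linarith [q.2.2.1, (c q.1).cast_nonneg (α := ℝ)]
  have hpos : ∀ q : J × unitInterval, (0 : ℝ) < 2 * c q.1 + 1 + q.2 := fun q =>
    (Nat.cast_add_one_pos _).trans_le (hge q)
  let f : C(J × unitInterval, unitInterval) :=
    ⟨fun q => ⟨(2 * c q.1 + 1 + q.2 : ℝ)⁻¹, inv_nonneg.2 (hpos q).le,
      inv_le_one_of_one_le₀ (by linarith [hge q, (c q.1).cast_nonneg (α := ℝ)])⟩,
      continuous_prod_of_discrete_left.2 fun j => Continuous.subtype_mk
        (Continuous.inv₀ (by fun_prop) fun t => (hpos (j, t)).ne') _⟩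
  have hlim : Tendsto f (coclosedCompact _) (𝓝 0) := by
    rw [coclosedCompact_prod_of_discreteTopology, tendsto_subtype_rng]
    have hc_lim : Tendsto (fun q : J × unitInterval => (c q.1 : ℝ)) (cofinite ×ˢ ⊤) atTop :=
      tendsto_natCast_atTop_atTop.comp <|
        (Nat.cofinite_eq_atTop ▸ hc.tendsto_cofinite).comp tendsto_fst
    exact (tendsto_atTop_mono (fun q => by linarith [hge q]) hc_lim).inv_tendsto_atTop
  have hf_ne : ∀ q, f q ≠ 0 := fun q h =>
    (inv_pos.2 (hpos q)).ne' (congrArg Subtype.val h)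
  have hf_inj : Injective f := fun q q' h =>
    injective_two_mul_add_one_add hc (inv_injective (congrArg Subtype.val h))
  refine ⟨_, (continuousMapMk f 0 hlim).continuous.isClosedEmbedding ?_⟩
  exact Option.injective_iff.2 ⟨hf_inj, by rintro ⟨q, hq⟩; exact hf_ne q hq⟩

lemma exists_isClosedEmbedding_sum_onePoint [Countable J] :
    ∃ e : unitInterval ⊕ OnePoint (J × unitInterval) → unitInterval, IsClosedEmbedding e := by
  obtain ⟨e, he⟩ := exists_isClosedEmbedding_onePoint_prod_unitInterval (J := J)
  obtain ⟨e', he'⟩ := exists_isClosedEmbedding_unitInterval_sum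
  exact ⟨_, he'.comp ((continuous_id.sumMap he.continuous).isClosedEmbedding
    (injective_id.sumMap he.injective))⟩

end NullSequence

/-! ### Gluing and Dugundji extension -/

section Glue

variable {ι X : Type*} [TopologicalSpace X] {A : Set X}

open Classical in
/-- The function which is `f` on `A` and, off `A`, the average of the functions `G j` with the
members of `ρ` as weights; the argument is the pair `(f, G)`. -/
def glue (ρ : PartitionOfUnity ι ↥Aᶜ) : (A → ℝ) × (ι → X → ℝ) →ₗ[ℝ] X → ℝ where
  toFun p x := if h : x ∈ A then p.1 ⟨x, h⟩ else
    ∑ j ∈ ρ.finsupport ⟨x, h⟩, ρ j ⟨x, h⟩ * p.2 j x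
  map_add' p q := by
    ext x
    by_cases hx : x ∈ A <;> simp [hx, mul_add, Finset.sum_add_distrib]
  map_smul' c p := by
    ext x
    by_cases hx : x ∈ A <;> simp [hx, Finset.mul_sum, mul_left_comm]

variable {ρ : PartitionOfUnity ι ↥Aᶜ} {f : A → ℝ} {G : ι → X → ℝ}

lemma glue_apply_of_mem (a : A) : glue ρ (f, G) a = f a := dif_pos a.2

lemma glue_apply_of_notMem (x : ↥Aᶜ) : glue ρ (f, G) x = ∑ᶠ j, ρ j x • G j x :=
  (dif_neg x.2).trans (ρ.sum_finsupport_smul_eq_finsum fun j (y : ↥Aᶜ) => G j y)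

lemma continuous_glue (hA : IsClosed A) (hf : Continuous f) (hG : ∀ j, Continuous (G j))
    (hclose : ∀ (a : A), ∀ ε > 0, ∀ᶠ y in 𝓝 (a : X), ∀ (hy : y ∈ Aᶜ) (j : ι),
      ρ j ⟨y, hy⟩ ≠ 0 → dist (G j y) (f a) < ε) : Continuous (glue ρ (f, G)) := by
  refine continuous_iff_continuousAt.2 fun x => ?_
  by_cases hx : x ∈ A
  · refine Metric.continuousAt_iff'.2 fun ε hε => ?_
    have hfx : ∀ᶠ y in 𝓝 x, ∀ hy : y ∈ A, dist (f ⟨y, hy⟩) (f ⟨x, hx⟩) < ε := by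
      have h := Metric.continuousAt_iff'.1 (hf.continuousAt (x := ⟨x, hx⟩)) ε hε
      rw [nhds_subtype_eq_comap, eventually_comap] at h
      exact h.mono fun y hfy hy => hfy ⟨y, hy⟩ rfl
    filter_upwards [hfx, hclose ⟨x, hx⟩ ε hε] with y hyA hyG
    rw [glue_apply_of_mem ⟨x, hx⟩]
    by_cases hy : y ∈ A
    · rw [glue_apply_of_mem ⟨y, hy⟩]
      exact hyA hy
    · rw [glue_apply_of_notMem ⟨y, hy⟩]
      exact ρ.finsum_smul_mem_convex (g := fun j (z : ↥Aᶜ) => G j z) (mem_univ _) (hyG hy)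
        (convex_ball (f ⟨x, hx⟩) ε)
  · refine (hA.isOpen_compl.isOpenEmbedding_subtypeVal.continuousAt_iff (x := ⟨x, hx⟩)).1
      (Continuous.continuousAt ?_)
    simp only [Function.comp_def, glue_apply_of_notMem]
    exact ρ.continuous_finsum_smul fun j y _ =>
      ((hG j).comp continuous_subtype_val).continuousAt

lemma continuous_glue_apply {Z : Type*} [TopologicalSpace Z] {F : Z → A → ℝ}
    {H : Z → ι → X → ℝ} (hF : ∀ a, Continuous fun z => F z a)
    (hH : ∀ j x, Continuous fun z => H z j x) (x : X) :
    Continuous fun z => glue ρ (F z, H z) x := by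
  by_cases hx : x ∈ A
  · simpa only [glue_apply_of_mem ⟨x, hx⟩] using hF ⟨x, hx⟩
  · simpa only [glue, LinearMap.coe_mk, AddHom.coe_mk, dif_neg hx] using
      continuous_finsetSum _ fun j _ => (hH j x).const_mul _

end Glue

section LinearExtension

variable {X : Type*} {A : Set X}

lemma exists_partitionOfUnity_dist_le_infDist [MetricSpace X] (hA : IsClosed A)
    (hne : A.Nonempty) : ∃ (ρ : PartitionOfUnity ↥Aᶜ ↥Aᶜ) (a : ↥Aᶜ → A),
      ∀ i y, ρ i y ≠ 0 → dist (y : X) (a i) ≤ 3 * Metric.infDist (y : X) A := by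
  have hpos : ∀ x : ↥Aᶜ, 0 < Metric.infDist (x : X) A := fun x =>
    (hA.notMem_iff_infDist_pos hne).1 x.2
  obtain ⟨ρ, hρ⟩ := PartitionOfUnity.exists_isSubordinate isClosed_univ
    (fun x : ↥Aᶜ => Metric.ball x (Metric.infDist (x : X) A / 4)) (fun x => Metric.isOpen_ball)
    fun x _ => mem_iUnion.2 ⟨x, Metric.mem_ball_self (by linarith [hpos x])⟩
  choose a haA ha using fun x : ↥Aᶜ =>
    (Metric.infDist_lt_iff hne).1 (by linarith [hpos x] : _ < 2 * Metric.infDist (x : X) A)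
  refine ⟨ρ, fun x => ⟨a x, haA x⟩, fun i y hy => ?_⟩
  have hyi : dist (y : X) i < Metric.infDist (i : X) A / 4 := hρ i (subset_tsupport _ hy)
  linarith [dist_triangle (y : X) i (a i), ha i, dist_comm (y : X) i,
    Metric.infDist_le_infDist_add_dist (s := A) (x := (i : X)) (y := y)]

theorem exists_dugundji_extension [TopologicalSpace X] [TopologicalSpace.MetrizableSpace X]
    (hA : IsClosed A) :
    ∃ E : C(A, ℝ) →ₗ[ℝ] C(X, ℝ), Continuous[ptTop A, ptTop X] E ∧ ∀ f (a : A), E f a = f a := by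
  let := TopologicalSpace.metrizableSpaceMetric X
  rcases A.eq_empty_or_nonempty with rfl | hne
  · exact ⟨0, continuous_ptTop_iff.2 fun _ => @continuous_const _ _ (ptTop _) _ _,
      fun _ => isEmptyElim⟩
  obtain ⟨ρ, a, ha⟩ := exists_partitionOfUnity_dist_le_infDist hA hne
  have hcont : ∀ f : C(A, ℝ), Continuous (glue ρ (f, fun i _ => f (a i))) := fun f => by
    refine continuous_glue hA f.continuous (fun i => continuous_const) fun b ε hε => ?_
    obtain ⟨δ, hδ, hfδ⟩ := Metric.continuousAt_iff.1 (f.continuous.continuousAt (x := b)) ε hε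
    filter_upwards [Metric.ball_mem_nhds (b : X) (by positivity : 0 < δ / 4)] with y hyb hy i hi
    refine hfδ (?_ : dist (a i : X) b < δ)
    linarith [dist_triangle_left (a i : X) b y, ha i ⟨y, hy⟩ hi, Metric.mem_ball.1 hyb,
      Metric.infDist_le_dist_of_mem (x := y) b.2]
  refine ⟨{ toFun f := ⟨glue ρ (f, fun i _ => f (a i)), hcont f⟩
            map_add' f g := ?_
            map_smul' c f := ?_ }, ?_, fun _ b => glue_apply_of_mem b⟩
  · exact DFunLike.coe_injective ((glue ρ).map_add (f, fun i _ => f (a i)) (g, fun i _ => g (a i)))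
  · exact DFunLike.coe_injective ((glue ρ).map_smul c (f, fun i _ => f (a i)))
  · let := ptTop A
    exact continuous_ptTop_iff.2 <| continuous_glue_apply continuous_eval_ptTop
      fun i _ => continuous_eval_ptTop (a i)

end LinearExtension

/-! ### Locally finite-dimensional complements -/

section LocallyFinDim

variable {X Y : Type*} [TopologicalSpace X] [TopologicalSpace Y]

lemma CovDimLE.of_isClosedEmbedding {n : ℕ} {e : Y → X} (h : CovDimLE X n)
    (he : IsClosedEmbedding e) : CovDimLE Y n := by
  intro ι U hι hU hUcover
  rcases isEmpty_or_nonempty ι with _ | _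
  · exact ⟨U, hU, fun _ => subset_rfl, hUcover, fun x => by simp [eq_empty_of_isEmpty]⟩
  choose W hW hWU using fun i => he.isInducing.isOpen_iff.1 (hU i)
  obtain ⟨V, hV, hVW, hVcover, hVcard⟩ := h ι (fun i => W i ∪ (range e)ᶜ) hι
    (fun i => (hW i).union he.isClosed_range.isOpen_compl) <| by
      rw [← iUnion_union, union_comm, ← compl_subset_iff_union, compl_compl]
      exact range_subset_iff.2 fun y => by simpa [← hWU] using hUcover.ge (mem_univ y)
  refine ⟨fun i => e ⁻¹' V i, fun i => (hV i).preimage he.continuous, fun i y hy => ?_, ?_,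
    fun y => hVcard (e y)⟩
  · rw [← hWU i]
    exact (hVW i hy).resolve_right (not_not_intro (mem_range_self y))
  · rw [← preimage_iUnion, hVcover, preimage_univ]

lemma FinDimSpace.of_isClosedEmbedding {e : Y → X} (h : FinDimSpace X)
    (he : IsClosedEmbedding e) : FinDimSpace Y :=
  h.imp fun _ hn => hn.of_isClosedEmbedding he

lemma FinDimSpace.exists_isCompact_mem_nhds [T2Space X] [LocallyCompactSpace Y] {i : Y → X}
    {U : Set X} {y : Y} (h : FinDimSpace U) (hi : Continuous i) (hinj : Injective i)
    (hU : i ⁻¹' U ∈ 𝓝 y) : ∃ C ∈ 𝓝 y, IsCompact C ∧ FinDimSpace C := by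
  obtain ⟨C, hCy, (hCU : MapsTo i C U), hC⟩ := local_compact_nhds hU
  have := isCompact_iff_compactSpace.1 hC
  exact ⟨C, hCy, hC, h.of_isClosedEmbedding
    ((hi.restrict hCU).isClosedEmbedding (hCU.restrict_inj.2 hinj.injOn))⟩

universe u

lemma exists_partitionOfUnity_finDimSpace_tsupport {Y : Type u} [TopologicalSpace Y]
    [LocallyCompactSpace Y] [SecondCountableTopology Y] [T2Space Y]
    (h : ∀ y : Y, ∃ C ∈ 𝓝 y, IsCompact C ∧ FinDimSpace C) :
    ∃ (ι : Type u) (_ : Countable ι) (ρ : PartitionOfUnity ι Y),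
      ∀ j, IsCompact (tsupport (ρ j)) ∧ FinDimSpace (tsupport (ρ j)) := by
  choose C hCy hC hCdim using h
  obtain ⟨s, hs, hcover⟩ := TopologicalSpace.countable_cover_nhds fun y =>
    interior_mem_nhds.2 (hCy y)
  obtain ⟨ρ, hρ⟩ := PartitionOfUnity.exists_isSubordinate isClosed_univ
    (fun y : s => interior (C y)) (fun _ => isOpen_interior) (by rw [iUnion_coe_set, hcover])
  have hρC : ∀ j, tsupport (ρ j) ⊆ C j := fun j => (hρ j).trans interior_subset
  exact ⟨s, hs.to_subtype, ρ, fun j => ⟨(hC j).of_isClosed_subset (isClosed_tsupport _) (hρC j),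
    (hCdim j).of_isClosedEmbedding (IsClosedEmbedding.inclusion (hρC j) <|
      (isClosed_tsupport _).preimage continuous_subtype_val)⟩⟩

end LocallyFinDim

section NullFamily

lemma eventually_cofinite_sigma_iff {ι : Type*} {κ : ι → Type*} [∀ j, Finite (κ j)]
    {p : (Σ j, κ j) → Prop} :
    (∀ᶠ q in cofinite, p q) ↔ ∀ᶠ j in cofinite, ∀ k, p ⟨j, k⟩ := by
  simp only [eventually_cofinite, not_forall]
  refine ⟨fun h => (h.image Sigma.fst).subset ?_, fun h => (h.preimage' (f := Sigma.fst)
    fun j _ => ?_).subset fun q hq => ⟨q.2, hq⟩⟩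
  · rintro j ⟨k, hk⟩
    exact ⟨⟨j, k⟩, hk, rfl⟩
  · rw [← range_sigmaMk]
    exact finite_range _

lemma tendsto_sigma_cofinite_iff {ι E : Type*} {κ : ι → Type*} [∀ j, Fintype (κ j)]
    [SeminormedAddCommGroup E] {γ : (Σ j, κ j) → E} :
    Tendsto γ cofinite (𝓝 0) ↔ Tendsto (fun j => ‖fun k => γ ⟨j, k⟩‖) cofinite (𝓝 0) := by
  rw [NormedAddGroup.tendsto_nhds_zero, NormedAddGroup.tendsto_nhds_zero]
  refine forall₂_congr fun ε hε => ?_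
  simp only [norm_norm, pi_norm_lt_iff hε, eventually_cofinite_sigma_iff]

variable {ι X : Type*} [TopologicalSpace X] [CompactSpace X] {A : Set X}
  {ρ : PartitionOfUnity ι ↥Aᶜ}

lemma continuous_glue_of_tendsto_zero [T2Space X] (hA : IsClosed A)
    (hρ : ∀ j, IsCompact (tsupport (ρ j))) {u : ι → C(X, ℝ)} (hu : Tendsto u cofinite (𝓝 0)) :
    Continuous (glue ρ (0, fun j => u j)) := by
  refine continuous_glue hA continuous_const (fun j => (u j).continuous) fun a ε hε => ?_
  have hfin := eventually_cofinite.1 (hu.norm.eventually_lt_const (by simpa using hε))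
  have hmiss : ∀ j, ∀ᶠ y in 𝓝 (a : X), y ∉ Subtype.val '' tsupport (ρ j) := fun j =>
    ((hρ j).image continuous_subtype_val).isClosed.isOpen_compl.mem_nhds
      fun ⟨x, _, hx⟩ => x.2 (hx ▸ a.2)
  filter_upwards [hfin.eventually_all.2 fun j _ => hmiss j] with y hy hyA j hj
  by_contra hle
  refine hy j (fun hlt => hle ?_) ⟨⟨y, hyA⟩, subset_tsupport _ hj, rfl⟩
  simpa using ((u j).norm_coe_le_norm y).trans_lt hlt

lemma eventually_abs_lt_of_mem_Czero {f : C(X, ℝ)} (hf : f ∈ Czero X A) {ε : ℝ} (hε : 0 < ε) :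
    ∀ᶠ j in cofinite, ∀ x ∈ tsupport (ρ j), |f x| < ε := by
  have hlarge : IsCompact {x : ↥Aᶜ | ε ≤ |f x|} := by
    rw [Topology.IsEmbedding.subtypeVal.isCompact_iff]
    have himage : Subtype.val '' {x : ↥Aᶜ | ε ≤ |f x|} = {x | ε ≤ |f x|} := by
      refine (Subtype.image_preimage_coe _ {x | ε ≤ |f x|}).trans (inter_eq_right.2 ?_)
      intro x hx hxA
      rw [mem_ofPred_eq, hf x hxA, abs_zero] at hx
      exact hε.not_ge hx
    rw [himage]
    exact (isClosed_le continuous_const f.continuous.abs).isCompact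
  refine (ρ.locallyFinite_tsupport.finite_nonempty_inter_compact hlarge).subset ?_
  intro j hj
  simpa [Set.Nonempty] using hj

end NullFamily

section Superposition

variable {ι X Y : Type*} {m : ι → ℕ} [TopologicalSpace X] [CompactSpace X]

lemma tendsto_meanSuperposition [TopologicalSpace Y] [CompactSpace Y]
    (φ : ∀ j, Fin (m j) → C(X, Y)) {γ : (Σ j, Fin (m j)) → C(Y, ℝ)}
    (hγ : Tendsto γ cofinite (𝓝 0)) :
    Tendsto (fun j => meanSuperposition (φ j) fun k => γ ⟨j, k⟩) cofinite (𝓝 0) :=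
  squeeze_zero_norm (fun j => norm_meanSuperposition_le (φ j) _) (tendsto_sigma_cofinite_iff.1 hγ)

variable {A : Set X} {ρ : PartitionOfUnity ι ↥Aᶜ}

lemma exists_superposition_eqOn_tsupport [TopologicalSpace.MetrizableSpace X]
    (hρ : ∀ j, IsCompact (tsupport (ρ j))) (hdim : ∀ j, FinDimSpace (tsupport (ρ j))) :
    ∃ (m : ι → ℕ) (φ : ∀ j, Fin (m j) → C(X, unitInterval)), ∀ f ∈ Czero X A,
      ∃ γ : (Σ j, Fin (m j)) → C(unitInterval, ℝ), Tendsto γ cofinite (𝓝 0) ∧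
        ∀ j, ∀ x ∈ tsupport (ρ j), meanSuperposition (φ j) (fun k => γ ⟨j, k⟩) x = f x := by
  have hcompact := fun j => isCompact_iff_compactSpace.1 (hρ j)
  have he : ∀ j, IsClosedEmbedding fun x : tsupport (ρ j) => (x : X) := fun j =>
    (continuous_subtype_val.comp continuous_subtype_val).isClosedEmbedding
      (Subtype.val_injective.comp Subtype.val_injective)
  choose m φ hφ using fun j => (hdim j).exists_superposition_of_isClosedEmbedding (he j)
  refine ⟨m, φ, fun f hf => ?_⟩
  choose γ hγ hγf using fun j => hφ j (f.comp ⟨_, (he j).continuous⟩)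
  refine ⟨fun q => γ q.1 q.2, tendsto_sigma_cofinite_iff.2 ?_, fun j x hx => hγf j ⟨x, hx⟩⟩
  have hlim : Tendsto (fun j => ‖f.comp ⟨_, (he j).continuous⟩‖) cofinite (𝓝 0) := by
    refine NormedAddGroup.tendsto_nhds_zero.2 fun ε hε => ?_
    filter_upwards [eventually_abs_lt_of_mem_Czero (ρ := ρ) hf hε] with j hj
    rw [norm_norm, ContinuousMap.norm_lt_iff _ hε]
    exact fun x => hj x x.2
  exact squeeze_zero (fun _ => norm_nonneg _) hγ (by simpa using hlim.const_mul 8)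

variable [T2Space X]

/-- The linear map sending a function on a null sequence of intervals to the function on `X` which
vanishes on `A` and is glued, off `A`, from the superpositions `meanSuperposition (φ j)` of the
slices of `g`. -/
def glueSuperpositions (hA : IsClosed A) (hρ : ∀ j, IsCompact (tsupport (ρ j)))
    (φ : ∀ j, Fin (m j) → C(X, unitInterval)) :
    C(OnePoint ((Σ j, Fin (m j)) × unitInterval), ℝ) →ₗ[ℝ] C(X, ℝ) where
  toFun g := ⟨glue ρ (0, fun j => meanSuperposition (φ j) fun k => slice g ⟨j, k⟩),
    continuous_glue_of_tendsto_zero hA hρ (tendsto_meanSuperposition φ (tendsto_slice g))⟩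
  map_add' g g' := DFunLike.coe_injective <| by
    rw [ContinuousMap.coe_add, ContinuousMap.coe_mk, ContinuousMap.coe_mk, ContinuousMap.coe_mk,
      ← map_add, Prod.mk_add_mk, add_zero]
    congr! with j
    rw [map_add slice]
    exact congrArg (⇑) ((meanSuperposition (φ j)).map_add (fun k => slice g ⟨j, k⟩)
      fun k => slice g' ⟨j, k⟩)
  map_smul' c g := DFunLike.coe_injective <| by
    rw [ContinuousMap.coe_smul, ContinuousMap.coe_mk, ContinuousMap.coe_mk, ← map_smul,
      Prod.smul_mk, smul_zero]
    congr! with j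
    rw [map_smul slice]
    exact congrArg (⇑) ((meanSuperposition (φ j)).map_smul c fun k => slice g ⟨j, k⟩)

lemma continuous_glueSuperpositions_ptTop (hA : IsClosed A)
    (hρ : ∀ j, IsCompact (tsupport (ρ j))) (φ : ∀ j, Fin (m j) → C(X, unitInterval)) :
    Continuous[ptTop _, ptTop X] (glueSuperpositions hA hρ φ) :=
  continuous_ptTop_iff.2 <|
    let := ptTop (OnePoint ((Σ j, Fin (m j)) × unitInterval))
    continuous_glue_apply (F := fun _ => 0) (fun _ => continuous_const) fun j =>
      continuous_ptTop_iff.1 <| continuous_meanSuperposition_ptTop (φ j) _ fun k =>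
        continuous_slice_ptTop (J := Σ j, Fin (m j)) ⟨j, k⟩

lemma glueSuperpositions_eq {hA : IsClosed A} {hρ : ∀ j, IsCompact (tsupport (ρ j))}
    {φ : ∀ j, Fin (m j) → C(X, unitInterval)} {f : C(X, ℝ)} (hf : f ∈ Czero X A)
    {g : C(OnePoint ((Σ j, Fin (m j)) × unitInterval), ℝ)}
    (hg : ∀ j, ∀ x ∈ tsupport (ρ j), meanSuperposition (φ j) (fun k => slice g ⟨j, k⟩) x = f x) :
    glueSuperpositions hA hρ φ g = f := by
  ext x
  change glue ρ (0, fun j => meanSuperposition (φ j) fun k => slice g ⟨j, k⟩) x = f x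
  by_cases hx : x ∈ A
  · rw [glue_apply_of_mem ⟨x, hx⟩, hf x hx, Pi.zero_apply]
  · have hterm : ∀ j, ρ j ⟨x, hx⟩ • meanSuperposition (φ j) (fun k => slice g ⟨j, k⟩) x =
        ρ j ⟨x, hx⟩ • f x := fun j => by
      rcases eq_or_ne (ρ j ⟨x, hx⟩) 0 with h0 | h0
      · rw [h0, zero_smul, zero_smul]
      · rw [hg j ⟨x, hx⟩ (subset_tsupport _ h0)]
    rw [glue_apply_of_notMem ⟨x, hx⟩, finsum_congr hterm, ← finsum_smul, ρ.sum_eq_one trivial,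
      one_smul]

end Superposition

section LocallyFinDimComplement

universe u

variable {X : Type u} [TopologicalSpace X] {A : Set X}

lemma exists_linearMap_Czero_le_range [CompactSpace X] [TopologicalSpace.MetrizableSpace X]
    (hA : IsClosed A) (h : ∀ y : ↥Aᶜ, ∃ C ∈ 𝓝 y, IsCompact C ∧ FinDimSpace C) :
    ∃ (J : Type u) (_ : Countable J) (_ : TopologicalSpace J) (_ : DiscreteTopology J)
      (T : C(OnePoint (J × unitInterval), ℝ) →ₗ[ℝ] C(X, ℝ)),
      Continuous[ptTop _, ptTop X] T ∧ Czero X A ≤ LinearMap.range T := by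
  have := TopologicalSpace.metrizableSpaceMetric X
  have := hA.isOpen_compl.locallyCompactSpace
  obtain ⟨ι, _, ρ, hρ⟩ := exists_partitionOfUnity_finDimSpace_tsupport h
  obtain ⟨hρ, hdim⟩ := forall_and.1 hρ
  obtain ⟨m, φ, hφ⟩ := exists_superposition_eqOn_tsupport hρ hdim
  refine ⟨Σ j, Fin (m j), inferInstance, inferInstance, inferInstance,
    glueSuperpositions hA hρ φ, continuous_glueSuperpositions_ptTop hA hρ φ, fun f hf => ?_⟩
  obtain ⟨γ, hγ, hγf⟩ := hφ f hf
  obtain ⟨g, rfl⟩ := exists_slice_eq hγ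
  exact ⟨g, glueSuperpositions_eq hf hγf⟩

namespace LDominates

variable {Y Z : Type*} [TopologicalSpace Y] [TopologicalSpace Z]

lemma sum_of_Czero_le_range [TopologicalSpace.MetrizableSpace X] (hA : IsClosed A)
    (hYA : LDominates Y A) {T : C(Z, ℝ) →ₗ[ℝ] C(X, ℝ)} (hT : Continuous[ptTop Z, ptTop X] T)
    (hrange : Czero X A ≤ LinearMap.range T) : LDominates (Y ⊕ Z) X := by
  obtain ⟨L, hL, hLsurj⟩ := hYA
  obtain ⟨E, hE, hEA⟩ := exists_dugundji_extension hA
  let inl : C(Y, Y ⊕ Z) := ⟨Sum.inl, continuous_inl⟩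
  let inr : C(Z, Y ⊕ Z) := ⟨Sum.inr, continuous_inr⟩
  refine ⟨E ∘ₗ L ∘ₗ (ContinuousMap.compRightAlgHom ℝ ℝ inl).toLinearMap +
    T ∘ₗ (ContinuousMap.compRightAlgHom ℝ ℝ inr).toLinearMap, ?_, fun f => ?_⟩
  · refine continuous_ptTop_iff.2 fun x => ?_
    let := ptTop (Y ⊕ Z)
    let := ptTop Y
    let := ptTop Z
    let := ptTop A
    exact ((continuous_ptTop_iff.1 hE x).comp (hL.comp (continuous_precomp_ptTop inl))).add
      ((continuous_ptTop_iff.1 hT x).comp (continuous_precomp_ptTop inr))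
  · obtain ⟨g, hg⟩ := hLsurj (f.restrict A)
    have hvanish : f - E (f.restrict A) ∈ Czero X A := fun x hx => by
      simp [hEA _ ⟨x, hx⟩]
    obtain ⟨w, hw⟩ := hrange hvanish
    refine ⟨⟨Sum.elim g w, g.continuous.sumElim w.continuous⟩, ?_⟩
    change E (L g) + T w = f
    rw [hg, hw, add_sub_cancel]

lemma unitInterval_of_isClosed [CompactSpace X] [TopologicalSpace.MetrizableSpace X]
    (hA : IsClosed A) (h : ∀ y : ↥Aᶜ, ∃ C ∈ 𝓝 y, IsCompact C ∧ FinDimSpace C)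
    (hIA : LDominates unitInterval A) : LDominates unitInterval X := by
  obtain ⟨J, _, _, _, T, hT, hrange⟩ := exists_linearMap_Czero_le_range hA h
  obtain ⟨e, he⟩ := exists_isClosedEmbedding_sum_onePoint (J := J)
  exact (of_isClosedEmbedding he).trans (sum_of_Czero_le_range hA hIA hT hrange)

end LDominates

end LocallyFinDimComplement

/-! ### Derived sets -/

section DerivedSets

variable {K : Type*} [TopologicalSpace K]

lemma fdDerived_zero : fdDerived K 0 = univ :=
  Ordinal.limitRecOn_zero ..

lemma fdDerived_add_one (o : Ordinal) :
    fdDerived K (o + 1) = fdDerived K o \ fdI K (fdDerived K o) :=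
  Ordinal.limitRecOn_add_one ..

lemma isClosed_sdiff_fdI {S : Set K} (hS : IsClosed S) : IsClosed (S \ fdI K S) := by
  refine isClosed_of_closure_subset fun x hx => ?_
  have hxS := hS.closure_subset_iff.2 sdiff_subset hx
  refine ⟨hxS, fun ⟨_, U, hU, hxU, hdim⟩ => ?_⟩
  obtain ⟨y, hyU, hyS, hy⟩ := mem_closure_iff.1 hx U hU hxU
  exact hy ⟨hyS, U, hU, hyU, hdim⟩

lemma isClosed_fdDerived_natCast (n : ℕ) : IsClosed (fdDerived K n) := by
  induction n with
  | zero => simpa only [Nat.cast_zero, fdDerived_zero] using isClosed_univ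
  | succ n ih => simpa only [Nat.cast_succ, fdDerived_add_one] using isClosed_sdiff_fdI ih

lemma LDominates.unitInterval_of_sdiff_fdI [CompactSpace K] [TopologicalSpace.MetrizableSpace K]
    {S : Set K} (hS : IsClosed S) (h : LDominates unitInterval ↥(S \ fdI K S)) :
    LDominates unitInterval S := by
  have := isCompact_iff_compactSpace.1 hS.isCompact
  let A : Set S := Subtype.val ⁻¹' (S \ fdI K S)
  have hA : IsClosed A := (isClosed_sdiff_fdI hS).preimage continuous_subtype_val
  have := isCompact_iff_compactSpace.1 hA.isCompact
  have := hA.isOpen_compl.locallyCompactSpace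
  have hAS := hS.isClosedEmbedding_subtypeVal.restrictPreimage (S \ fdI K S)
  refine .unitInterval_of_isClosed hA (fun y => ?_) (h.trans (.of_isClosedEmbedding hAS))
  obtain ⟨_, U, hU, hyU, hdim⟩ : (y : K) ∈ fdI K S := by
    by_contra hy
    exact y.2 ⟨y.1.2, hy⟩
  have hval : Continuous fun z : ↥Aᶜ => ((z : S) : K) :=
    continuous_subtype_val.comp continuous_subtype_val
  refine hdim.exists_isCompact_mem_nhds hval
    (Subtype.val_injective.comp Subtype.val_injective) ?_
  filter_upwards [(hU.preimage hval).mem_nhds hyU] with z hz using ⟨hz, z.1.2⟩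

end DerivedSets

end

/-- a nonempty compact metrizable space with finite fd-height is
ℓ-dominated by the unit interval. -/
theorem interval_ellDominates_of_finite_fdHeight
    (K : Type*) [TopologicalSpace K] [CompactSpace K]
    [TopologicalSpace.MetrizableSpace K] [Nonempty K]
    (hfd : ∃ n : ℕ, fdDerived K (n : Ordinal) = ∅) :
    LDominates unitInterval K := by
  obtain ⟨n, hn⟩ := hfd
  have hbase : LDominates unitInterval (fdDerived K n) := by
    have := isEmpty_coe_sort.2 hn
    exact .of_isEmpty
  have hstep : ∀ k < n, LDominates unitInterval (fdDerived K (k + 1 : ℕ)) →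
      LDominates unitInterval (fdDerived K k) := fun k _ h => by
    rw [Nat.cast_succ, fdDerived_add_one] at h
    exact .unitInterval_of_sdiff_fdI (isClosed_fdDerived_natCast k) h
  have huniv : LDominates unitInterval (univ : Set K) := by
    have h := Nat.decreasingInduction (motive := fun k _ =>
      LDominates unitInterval (fdDerived K k)) hstep hbase n.zero_le
    rwa [Nat.cast_zero, fdDerived_zero] at h
  exact huniv.trans (.of_isClosedEmbedding (Homeomorph.Set.univ K).symm.isClosedEmbedding)

end
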